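/- Let α > −1 and n ≥ 1, let ψ be analytic on 𝔻, not identically 0, and φ a nonconstant analytic self-map of 𝔻 with φ(0) = 0, and suppose D_{ψ,φ,n} is bounded on A_α². Then D_{ψ,φ,n} is normal (commutes with its adjoint) if and only if ψ(z) = a z^n and φ(z) = b z for some a ∈ ℂ \ {0} and b ∈ 𝔻 \ {0}; moreover, in this case D_{ψ,φ,n} is J-symmetric. -/

import Mathlib

open Complex Metric Set

noncomputable section

/-- The open unit disk in `ℂ`. -/
def unitDisk : Set ℂ := Metric.ball 0 1

/-- `wb2 α j` is `β(j)² = j!·Γ(α+2)/Γ(j+α+2)`, the square of the norm of `z^j` in `A_α²`. -/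
def wb2 (α : ℝ) (j : ℕ) : ℝ :=
  (j.factorial : ℝ) * Real.Gamma (α + 2) / Real.Gamma ((j : ℝ) + α + 2)

/-- The `j`-th Taylor coefficient of `f` at `0`. -/
def tcoeff (f : ℂ → ℂ) (j : ℕ) : ℂ := iteratedDeriv j f 0 / (j.factorial : ℂ)

/-- An abstract model of the weighted Bergman space `A_α²`: a complex Hilbert space `H`
whose elements are (identified with) the analytic functions on the unit disk with
square-summable weighted Taylor coefficients, with the weighted `ℓ²` inner product. -/
structure BergmanModel (α : ℝ) (H : Type) [NormedAddCommGroup H]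
    [InnerProductSpace ℂ H] where
  emb : H →ₗ[ℂ] (ℂ → ℂ)
  analyticOn : ∀ f : H, AnalyticOnNhd ℂ (emb f) unitDisk
  summable_norm : ∀ f : H, Summable (fun j => ‖tcoeff (emb f) j‖ ^ 2 * wb2 α j)
  inj : ∀ f g : H, Set.EqOn (emb f) (emb g) unitDisk → f = g
  exists_rep : ∀ F : ℂ → ℂ, AnalyticOnNhd ℂ F unitDisk →
      Summable (fun j => ‖tcoeff F j‖ ^ 2 * wb2 α j) →
      ∃ f : H, Set.EqOn (emb f) F unitDisk
  inner_eq : ∀ f g : H,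
      (@inner ℂ H _ f g) =
        ∑' j : ℕ, (starRingEnd ℂ) (tcoeff (emb f) j) * tcoeff (emb g) j * (wb2 α j : ℂ)

/-- The derivative-evaluation kernel `K_w^{(m)}(z) = m!·z^m / (β(m)²·(1-conj(w)·z)^(m+α+2))`. -/
def kern (α : ℝ) (m : ℕ) (w z : ℂ) : ℂ :=
  (m.factorial : ℂ) * z ^ m /
    ((wb2 α m : ℂ) * (1 - (starRingEnd ℂ) w * z) ^ ((m : ℂ) + (α : ℂ) + 2))

/-!
The operator sends `z ^ j` to `j.descFactorial n * ψ * φ ^ (j - n)`, so it kills `z ^ i` for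
`i < n`. If it is normal, so does its adjoint, which forces `ψ` to vanish to order `n` at `0`; as
`φ 0 = 0`, the matrix of the operator in the monomials is then lower triangular. A normal triangular
operator is diagonal, and comparing the images of `z ^ n` and `z ^ (n + 1)` with multiples of
themselves yields `ψ = a z ^ n` and `φ = b z`. The eigenvalues `a * j.descFactorial n * b ^ (j - n)`
are bounded only if `‖b‖ < 1`. Conversely, an operator that is diagonal in the monomials is normal,
and `J`-symmetric because `J` fixes the monomials.
-/

open ContinuousLinearMap
open scoped Topology InnerProductSpace ComplexConjugate

lemma norm_le_opNorm_of_apply_eq_smul {𝕜 E : Type*} [NontriviallyNormedField 𝕜]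
    [NormedAddCommGroup E] [NormedSpace 𝕜 E] {T : E →L[𝕜] E} {c : 𝕜} {v : E} (hv : v ≠ 0)
    (h : T v = c • v) : ‖c‖ ≤ ‖T‖ := by
  have hle : ‖c‖ * ‖v‖ ≤ ‖T‖ * ‖v‖ := by simpa only [h, norm_smul] using T.le_opNorm v
  exact le_of_mul_le_mul_right hle (norm_pos_iff.mpr hv)

lemma isStarNormal_sub_smul_one {R A : Type*} [CommSemiring R] [Star R] [Ring A] [StarRing A]
    [Algebra R A] [StarModule R A] {x : A} (hx : IsStarNormal x) (c : R) :
    IsStarNormal (x - c • (1 : A)) := by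
  have hcomm : Commute x (star (c • (1 : A))) := by
    rw [star_smul, star_one]
    exact (Commute.one_right x).smul_right _
  exact hcomm.isStarNormal_sub

section HilbertSpace

variable {𝕜 E ι : Type*} [RCLike 𝕜] [NormedAddCommGroup E] [InnerProductSpace 𝕜 E]

lemma hilbertBasis_ext_inner (b : HilbertBasis ι 𝕜 E) {x y : E}
    (h : ∀ i, ⟪b i, x⟫_𝕜 = ⟪b i, y⟫_𝕜) : x = y :=
  b.repr.injective <| lp.ext <| funext fun i => by
    simpa only [b.repr_apply_apply] using h i

variable [CompleteSpace E] {T : E →L[𝕜] E}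

lemma comp_adjoint_eq_adjoint_comp_iff_isStarNormal :
    T.comp (adjoint T) = (adjoint T).comp T ↔ IsStarNormal T :=
  eq_comm.trans (isStarNormal_iff T).symm

lemma adjoint_apply_eq_conj_smul_iff (hT : IsStarNormal T) {c : 𝕜} {v : E} :
    adjoint T v = conj c • v ↔ T v = c • v := by
  have h := (isStarNormal_sub_smul_one hT c).adjoint_apply_eq_zero_iff v
  simpa only [← star_eq_adjoint, star_sub, star_smul, star_one, sub_apply, smul_apply,
    one_apply_eq_self, starRingEnd_apply, sub_eq_zero] using h

lemma apply_eq_smul_of_isStarNormal_of_lowerTriangular [LinearOrder ι] [WellFoundedLT ι]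
    (b : HilbertBasis ι 𝕜 E) (hT : IsStarNormal T)
    (htri : ∀ i j, i < j → ⟪b i, T (b j)⟫_𝕜 = 0) (j : ι) :
    T (b j) = ⟪b j, T (b j)⟫_𝕜 • b j := by
  induction j using WellFoundedLT.induction with
  | ind j ih =>
    rw [← adjoint_apply_eq_conj_smul_iff hT]
    refine hilbertBasis_ext_inner b fun i => ?_
    rw [adjoint_inner_right, inner_smul_right]
    rcases lt_trichotomy i j with hij | rfl | hji
    · rw [ih i hij, inner_smul_left, b.orthonormal.inner_eq_zero hij.ne, mul_zero, mul_zero]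
    · rw [inner_self_eq_norm_sq_to_K, b.orthonormal.norm_eq_one, inner_conj_symm]
      simp
    · rw [← inner_conj_symm, htri j i hji, b.orthonormal.inner_eq_zero hji.ne', map_zero, mul_zero]

section Diagonal

variable (b : HilbertBasis ι 𝕜 E) {l : ι → 𝕜} (hl : ∀ i, T (b i) = l i • b i)
include hl

lemma adjoint_apply_of_diagonal (j : ι) : adjoint T (b j) = conj (l j) • b j := by
  refine hilbertBasis_ext_inner b fun i => ?_
  rw [adjoint_inner_right, hl, inner_smul_left, inner_smul_right]
  rcases eq_or_ne i j with rfl | hij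
  · rfl
  · rw [b.orthonormal.inner_eq_zero hij, mul_zero, mul_zero]

lemma isStarNormal_of_diagonal : IsStarNormal T := by
  rw [← comp_adjoint_eq_adjoint_comp_iff_isStarNormal]
  have hdense : Dense (Submodule.span 𝕜 (range b) : Set E) :=
    Submodule.dense_iff_topologicalClosure_eq_top.mpr b.dense_span
  refine ContinuousLinearMap.ext_on hdense ?_
  rintro _ ⟨j, rfl⟩
  simp only [comp_apply, adjoint_apply_of_diagonal b hl, hl, map_smul]
  exact smul_comm _ _ _

lemma conj_adjoint_conj_apply_of_diagonal {C : E → E}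
    (hC : ∀ i x, ⟪b i, C x⟫_𝕜 = conj ⟪b i, x⟫_𝕜) (x : E) : C (adjoint T (C x)) = T x := by
  refine hilbertBasis_ext_inner b fun i => ?_
  calc ⟪b i, C (adjoint T (C x))⟫_𝕜
      = conj ⟪T (b i), C x⟫_𝕜 := by rw [hC, adjoint_inner_right]
    _ = l i * ⟪b i, x⟫_𝕜 := by simp only [hl, inner_smul_left, hC, map_mul, RCLike.conj_conj]
    _ = ⟪b i, T x⟫_𝕜 := by
      rw [← adjoint_inner_left, adjoint_apply_of_diagonal b hl, inner_smul_left, RCLike.conj_conj]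

end Diagonal

end HilbertSpace

section TaylorCoefficients

lemma zero_mem_unitDisk : (0 : ℂ) ∈ unitDisk := mem_ball_self one_pos

lemma eventuallyEq_of_eqOn_unitDisk {f g : ℂ → ℂ} (h : EqOn f g unitDisk) {z : ℂ}
    (hz : z ∈ unitDisk) : f =ᶠ[𝓝 z] g :=
  h.eventuallyEq_of_mem (isOpen_ball.mem_nhds hz)

lemma tcoeff_congr {f g : ℂ → ℂ} (h : EqOn f g unitDisk) (j : ℕ) : tcoeff f j = tcoeff g j := by
  rw [tcoeff, tcoeff, (eventuallyEq_of_eqOn_unitDisk h zero_mem_unitDisk).iteratedDeriv_eq]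

lemma tcoeff_eq_zero_iff {f : ℂ → ℂ} {j : ℕ} : tcoeff f j = 0 ↔ iteratedDeriv j f 0 = 0 := by
  simp [tcoeff, Nat.factorial_ne_zero]

lemma tcoeff_pow (i j : ℕ) : tcoeff (fun z => z ^ j) i = if i = j then 1 else 0 := by
  rw [tcoeff, iteratedDeriv_fun_pow_zero]
  rcases eq_or_ne i j with rfl | hij
  · simp [Nat.factorial_ne_zero]
  · simp [hij]

lemma tcoeff_const_mul (c : ℂ) (f : ℂ → ℂ) (j : ℕ) :
    tcoeff (fun z => c * f z) j = c * tcoeff f j := by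
  rw [tcoeff, tcoeff, iteratedDeriv_const_mul_field, mul_div_assoc]

lemma iteratedDeriv_conj_conj {𝕜 : Type*} [RCLike 𝕜] (f : 𝕜 → 𝕜) (j : ℕ) :
    iteratedDeriv j (fun z => conj (f (conj z))) = fun z => conj (iteratedDeriv j f (conj z)) := by
  induction j with
  | zero => simp only [iteratedDeriv_zero]
  | succ j ih =>
    rw [iteratedDeriv_succ, ih, iteratedDeriv_succ]
    exact funext fun _ => congrFun (deriv_conj_conj (f := iteratedDeriv j f)) _

lemma tcoeff_conj_conj (f : ℂ → ℂ) (j : ℕ) :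
    tcoeff (fun z => conj (f (conj z))) j = conj (tcoeff f j) := by
  simp [tcoeff, iteratedDeriv_conj_conj]

lemma natCast_le_analyticOrderAt_zero_iff_tcoeff {f : ℂ → ℂ} (hf : AnalyticAt ℂ f 0) {n : ℕ} :
    n ≤ analyticOrderAt f 0 ↔ ∀ i < n, tcoeff f i = 0 := by
  simp only [natCast_le_analyticOrderAt_iff_iteratedDeriv_eq_zero hf, tcoeff_eq_zero_iff]

lemma eqOn_zero_of_tcoeff_eq_zero {f : ℂ → ℂ} (hf : AnalyticOnNhd ℂ f unitDisk)
    (h : ∀ j, tcoeff f j = 0) : EqOn f 0 unitDisk := by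
  have horder : analyticOrderAt f 0 = ⊤ := ENat.eq_top_iff_forall_ge.mpr fun _ =>
    (natCast_le_analyticOrderAt_zero_iff_tcoeff (hf 0 zero_mem_unitDisk)).mpr fun i _ => h i
  exact hf.eqOn_zero_of_preconnected_of_eventuallyEq_zero (convex_ball (0 : ℂ) 1).isPreconnected
    zero_mem_unitDisk (analyticOrderAt_eq_top.mp horder)

end TaylorCoefficients

lemma wb2_pos {α : ℝ} (hα : -1 < α) (j : ℕ) : 0 < wb2 α j := by
  have hnum : 0 < Real.Gamma (α + 2) := Real.Gamma_pos_of_pos (by linarith)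
  have hden : 0 < Real.Gamma (j + α + 2) :=
    Real.Gamma_pos_of_pos (by linarith [j.cast_nonneg (α := ℝ)])
  rw [wb2]
  positivity

lemma sqrt_wb2_ne_zero {α : ℝ} (hα : -1 < α) (j : ℕ) : (√(wb2 α j) : ℂ) ≠ 0 := by
  exact_mod_cast (Real.sqrt_pos.mpr (wb2_pos hα j)).ne'

namespace BergmanModel

variable {α : ℝ} {H : Type} [NormedAddCommGroup H] [InnerProductSpace ℂ H] (M : BergmanModel α H)

lemma exists_eqOn_pow (j : ℕ) : ∃ e : H, EqOn (M.emb e) (fun z => z ^ j) unitDisk := by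
  refine M.exists_rep _ (fun z _ => by fun_prop) (summable_of_ne_finset_zero (s := {j}) ?_)
  intro i hi
  simp [tcoeff_pow, Finset.notMem_singleton.mp hi]

/-- The monomial `z ^ j` as an element of the Bergman space. -/
def monomial (j : ℕ) : H := (M.exists_eqOn_pow j).choose

lemma eqOn_emb_monomial (j : ℕ) : EqOn (M.emb (M.monomial j)) (fun z => z ^ j) unitDisk :=
  (M.exists_eqOn_pow j).choose_spec

lemma tcoeff_emb_monomial (i j : ℕ) :
    tcoeff (M.emb (M.monomial j)) i = if i = j then 1 else 0 := by
  rw [tcoeff_congr (M.eqOn_emb_monomial j), tcoeff_pow]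

lemma inner_monomial_left (j : ℕ) (f : H) :
    ⟪M.monomial j, f⟫_ℂ = tcoeff (M.emb f) j * (wb2 α j : ℂ) := by
  rw [M.inner_eq, tsum_eq_single j fun i hi => by simp [tcoeff_emb_monomial, hi]]
  simp [tcoeff_emb_monomial]

lemma eq_zero_of_tcoeff_emb_eq_zero {f : H} (h : ∀ j, tcoeff (M.emb f) j = 0) : f = 0 :=
  M.inj f 0 <| by simpa only [map_zero] using eqOn_zero_of_tcoeff_eq_zero (M.analyticOn f) h

lemma inner_sqrt_inv_smul_monomial_left (hα : -1 < α) (j : ℕ) (f : H) :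
    ⟪((√(wb2 α j))⁻¹ : ℂ) • M.monomial j, f⟫_ℂ = √(wb2 α j) * tcoeff (M.emb f) j := by
  have hsq : (wb2 α j : ℂ) = √(wb2 α j) * √(wb2 α j) := by
    exact_mod_cast (Real.mul_self_sqrt (wb2_pos hα j).le).symm
  rw [inner_smul_left, inner_monomial_left, hsq, map_inv₀, Complex.conj_ofReal, mul_left_comm,
    inv_mul_cancel_left₀ (sqrt_wb2_ne_zero hα j), mul_comm]

lemma orthonormal_sqrt_inv_smul_monomial (hα : -1 < α) :
    Orthonormal ℂ fun j => ((√(wb2 α j))⁻¹ : ℂ) • M.monomial j := by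
  rw [orthonormal_iff_ite]
  intro i j
  rw [inner_smul_right, M.inner_sqrt_inv_smul_monomial_left hα, tcoeff_emb_monomial]
  split_ifs with hij
  · subst hij
    simp [sqrt_wb2_ne_zero hα]
  · simp

lemma span_sqrt_inv_smul_monomial_orthogonal (hα : -1 < α) :
    (Submodule.span ℂ (range fun j => ((√(wb2 α j))⁻¹ : ℂ) • M.monomial j))ᗮ = ⊥ := by
  refine (Submodule.eq_bot_iff _).mpr fun f hf => M.eq_zero_of_tcoeff_emb_eq_zero fun j => ?_
  have hinner := hf _ (Submodule.subset_span ⟨j, rfl⟩)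
  rw [M.inner_sqrt_inv_smul_monomial_left hα] at hinner
  exact (mul_eq_zero.mp hinner).resolve_left (sqrt_wb2_ne_zero hα j)

variable [CompleteSpace H]

/-- The Hilbert basis `z ^ j / β(j)` of normalized monomials. -/
def monomialBasis (hα : -1 < α) : HilbertBasis ℕ ℂ H :=
  .mkOfOrthogonalEqBot (M.orthonormal_sqrt_inv_smul_monomial hα)
    (M.span_sqrt_inv_smul_monomial_orthogonal hα)

lemma monomialBasis_apply (hα : -1 < α) (j : ℕ) :
    M.monomialBasis hα j = ((√(wb2 α j))⁻¹ : ℂ) • M.monomial j := by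
  rw [monomialBasis, HilbertBasis.coe_mkOfOrthogonalEqBot]

lemma inner_monomialBasis_left (hα : -1 < α) (j : ℕ) (f : H) :
    ⟪M.monomialBasis hα j, f⟫_ℂ = √(wb2 α j) * tcoeff (M.emb f) j := by
  rw [monomialBasis_apply, M.inner_sqrt_inv_smul_monomial_left hα]

lemma apply_monomialBasis_eq_smul_iff (hα : -1 < α) {T : H →L[ℂ] H} {j : ℕ} {c : ℂ} :
    T (M.monomialBasis hα j) = c • M.monomialBasis hα j ↔
      T (M.monomial j) = c • M.monomial j := by
  rw [monomialBasis_apply, map_smul, smul_comm c]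
  exact (smul_right_injective H (inv_ne_zero (sqrt_wb2_ne_zero hα j))).eq_iff

lemma inner_monomialBasis_conj (hα : -1 < α) {J : H → H}
    (hJ : ∀ f, ∀ z ∈ unitDisk, M.emb (J f) z = conj (M.emb f (conj z))) (j : ℕ) (f : H) :
    ⟪M.monomialBasis hα j, J f⟫_ℂ = conj ⟪M.monomialBasis hα j, f⟫_ℂ := by
  simp only [inner_monomialBasis_left, tcoeff_congr (hJ f), tcoeff_conj_conj, map_mul,
    Complex.conj_ofReal]

end BergmanModel

/-- `T` is the weighted composition–differentiation operator `D_{ψ,φ,n} f = ψ * (f⁽ⁿ⁾ ∘ φ)` on the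
Bergman space `M`; equality is only required on the disk, where elements of `M` are determined. -/
def IsWeightedCompDiff {α : ℝ} {H : Type} [NormedAddCommGroup H] [InnerProductSpace ℂ H]
    (M : BergmanModel α H) (ψ φ : ℂ → ℂ) (n : ℕ) (T : H →L[ℂ] H) : Prop :=
  ∀ f : H, ∀ z ∈ unitDisk, M.emb (T f) z = ψ z * iteratedDeriv n (M.emb f) (φ z)

section Symbols

lemma eq_div_mul_of_mul_eq_mul_pow_succ {𝕜 : Type*} [Field 𝕜] {s : Set 𝕜} {ψ φ : 𝕜 → 𝕜}
    {a c : 𝕜} {n : ℕ} (ha : a ≠ 0) (hφ0 : φ 0 = 0) (hψ : ∀ z ∈ s, ψ z = a * z ^ n)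
    (hψφ : ∀ z ∈ s, ψ z * φ z = c * z ^ (n + 1)) : ∀ z ∈ s, φ z = c / a * z := by
  intro z hz
  rcases eq_or_ne z 0 with rfl | hz0
  · rw [hφ0, mul_zero]
  · have h := hψφ z hz
    rw [hψ z hz] at h
    rw [div_mul_eq_mul_div, eq_div_iff ha]
    apply mul_left_cancel₀ (pow_ne_zero n hz0)
    linear_combination h

lemma natCast_add_le_analyticOrderAt_mul_pow {𝕜 : Type*} [NontriviallyNormedField 𝕜]
    {ψ φ : 𝕜 → 𝕜} {z₀ : 𝕜} {n : ℕ} (hψ : AnalyticAt 𝕜 ψ z₀) (hφ : AnalyticAt 𝕜 φ z₀)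
    (hφ0 : φ z₀ = 0) (hn : n ≤ analyticOrderAt ψ z₀) (k : ℕ) :
    ((n + k : ℕ) : ℕ∞) ≤ analyticOrderAt (ψ * φ ^ k) z₀ := by
  have hφ_order : 1 ≤ analyticOrderAt φ z₀ :=
    Order.one_le_iff_ne_zero.mpr (hφ.analyticOrderAt_ne_zero.mpr hφ0)
  rw [analyticOrderAt_mul hψ (hφ.pow k), analyticOrderAt_pow hφ, Nat.cast_add]
  gcongr
  simpa only [nsmul_one] using nsmul_le_nsmul_right hφ_order k

lemma succ_le_add_descFactorial {n : ℕ} (hn : n ≠ 0) (k : ℕ) :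
    k + 1 ≤ (n + k).descFactorial n :=
  calc k + 1 ≤ (k + 1) ^ n := Nat.le_self_pow hn _
    _ = (n + k + 1 - n) ^ n := by rw [add_assoc, Nat.add_sub_cancel_left]
    _ ≤ (n + k).descFactorial n := Nat.pow_sub_le_descFactorial _ _

end Symbols

namespace IsWeightedCompDiff

variable {α : ℝ} {H : Type} [NormedAddCommGroup H] [InnerProductSpace ℂ H] {M : BergmanModel α H}
  {ψ φ : ℂ → ℂ} {n : ℕ} {T : H →L[ℂ] H} (hT : IsWeightedCompDiff M ψ φ n T)
  (hφm : ∀ z ∈ unitDisk, φ z ∈ unitDisk)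
include hT hφm

lemma eqOn_emb_apply_monomial (j : ℕ) :
    EqOn (M.emb (T (M.monomial j))) (fun z => j.descFactorial n * (ψ * φ ^ (j - n)) z)
      unitDisk := by
  intro z hz
  have hderiv := eventuallyEq_of_eqOn_unitDisk (M.eqOn_emb_monomial j) (hφm z hz)
  rw [hT _ z hz, hderiv.iteratedDeriv_eq, iteratedDeriv_pow]
  exact mul_left_comm _ _ _

lemma tcoeff_emb_apply_monomial (i j : ℕ) :
    tcoeff (M.emb (T (M.monomial j))) i =
      j.descFactorial n * tcoeff (ψ * φ ^ (j - n)) i := by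
  rw [tcoeff_congr (hT.eqOn_emb_apply_monomial hφm j), tcoeff_const_mul]

lemma apply_monomial_eq_smul_iff {j : ℕ} {c : ℂ} :
    T (M.monomial j) = c • M.monomial j ↔
      ∀ z ∈ unitDisk, j.descFactorial n * (ψ z * φ z ^ (j - n)) = c * z ^ j := by
  have hleft := hT.eqOn_emb_apply_monomial hφm j
  have hright : EqOn (M.emb (c • M.monomial j)) (fun z => c * z ^ j) unitDisk := by
    intro z hz
    rw [map_smul, Pi.smul_apply, M.eqOn_emb_monomial j hz, smul_eq_mul]
  refine ⟨fun h z hz => ?_, fun h => M.inj _ _ ((hleft.trans h).trans hright.symm)⟩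
  calc j.descFactorial n * (ψ z * φ z ^ (j - n))
      = M.emb (T (M.monomial j)) z := (hleft hz).symm
    _ = c * z ^ j := by rw [h]; exact hright hz

lemma apply_monomial_eq_zero_of_lt {j : ℕ} (hj : j < n) : T (M.monomial j) = 0 := by
  rw [← zero_smul ℂ (M.monomial j), hT.apply_monomial_eq_smul_iff hφm,
    Nat.descFactorial_of_lt hj]
  simp

variable [CompleteSpace H]

lemma natCast_le_analyticOrderAt (hα : -1 < α) (hN : IsStarNormal T) (hψ : AnalyticAt ℂ ψ 0) :
    n ≤ analyticOrderAt ψ 0 := by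
  rw [natCast_le_analyticOrderAt_zero_iff_tcoeff hψ]
  intro i hi
  have hadjoint : adjoint T (M.monomial i) = 0 :=
    (hN.adjoint_apply_eq_zero_iff _).mpr (hT.apply_monomial_eq_zero_of_lt hφm hi)
  have hinner : ⟪M.monomial i, T (M.monomial n)⟫_ℂ = 0 := by
    rw [← adjoint_inner_left, hadjoint, inner_zero_left]
  simpa [M.inner_monomial_left, hT.tcoeff_emb_apply_monomial hφm, (wb2_pos hα i).ne',
    Nat.descFactorial_self, Nat.factorial_ne_zero] using hinner

lemma inner_monomialBasis_apply_eq_zero (hα : -1 < α) (hN : IsStarNormal T)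
    (hψ : AnalyticAt ℂ ψ 0) (hφ : AnalyticAt ℂ φ 0) (hφ0 : φ 0 = 0) {i j : ℕ} (hij : i < j) :
    ⟪M.monomialBasis hα i, T (M.monomialBasis hα j)⟫_ℂ = 0 := by
  suffices htcoeff : tcoeff (M.emb (T (M.monomial j))) i = 0 by
    rw [M.monomialBasis_apply hα j, map_smul, inner_smul_right, M.inner_monomialBasis_left,
      htcoeff, mul_zero, mul_zero]
  rw [hT.tcoeff_emb_apply_monomial hφm]
  rcases lt_or_ge j n with hj | hj
  · rw [Nat.descFactorial_of_lt hj, Nat.cast_zero, zero_mul]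
  · have horder := natCast_add_le_analyticOrderAt_mul_pow hψ hφ hφ0
      (hT.natCast_le_analyticOrderAt hφm hα hN hψ) (j - n)
    rw [Nat.add_sub_cancel' hj] at horder
    rw [(natCast_le_analyticOrderAt_zero_iff_tcoeff (hψ.mul (hφ.pow _))).mp horder i hij, mul_zero]

lemma exists_diagonal_of_isStarNormal (hα : -1 < α) (hN : IsStarNormal T)
    (hψ : AnalyticAt ℂ ψ 0) (hφ : AnalyticAt ℂ φ 0) (hφ0 : φ 0 = 0) :
    ∃ l : ℕ → ℂ, ∀ j, T (M.monomialBasis hα j) = l j • M.monomialBasis hα j :=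
  ⟨_, apply_eq_smul_of_isStarNormal_of_lowerTriangular (M.monomialBasis hα) hN fun _ _ hij =>
    hT.inner_monomialBasis_apply_eq_zero hφm hα hN hψ hφ hφ0 hij⟩

lemma exists_symbols_of_diagonal (hα : -1 < α) {l : ℕ → ℂ}
    (hl : ∀ j, T (M.monomialBasis hα j) = l j • M.monomialBasis hα j) (hφ0 : φ 0 = 0)
    (hψ0 : ∃ z ∈ unitDisk, ψ z ≠ 0) (hφnc : ∃ z ∈ unitDisk, ∃ w ∈ unitDisk, φ z ≠ φ w) :
    ∃ a b : ℂ, a ≠ 0 ∧ b ≠ 0 ∧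
      (∀ z ∈ unitDisk, ψ z = a * z ^ n) ∧ (∀ z ∈ unitDisk, φ z = b * z) := by
  have hmonomial (j : ℕ) :=
    (hT.apply_monomial_eq_smul_iff hφm).mp ((M.apply_monomialBasis_eq_smul_iff hα).mp (hl j))
  have hdesc {j : ℕ} (hj : n ≤ j) : (j.descFactorial n : ℂ) ≠ 0 := by
    exact_mod_cast (Nat.descFactorial_pos.mpr hj).ne'
  have hψ : ∀ z ∈ unitDisk, ψ z = l n / n.descFactorial n * z ^ n := by
    intro z hz
    rw [div_mul_eq_mul_div, eq_div_iff (hdesc le_rfl), ← hmonomial n z hz, Nat.sub_self, pow_zero]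
    ring
  have ha : l n / n.descFactorial n ≠ 0 := by
    intro ha
    obtain ⟨z, hz, hψz⟩ := hψ0
    exact hψz (by rw [hψ z hz, ha, zero_mul])
  have hψφ : ∀ z ∈ unitDisk,
      ψ z * φ z = l (n + 1) / (n + 1).descFactorial n * z ^ (n + 1) := by
    intro z hz
    rw [div_mul_eq_mul_div, eq_div_iff (hdesc n.le_succ), ← hmonomial (n + 1) z hz,
      Nat.add_sub_cancel_left, pow_one]
    ring
  have hφ := eq_div_mul_of_mul_eq_mul_pow_succ ha hφ0 hψ hψφ
  refine ⟨_, _, ha, fun hb => ?_, hψ, hφ⟩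
  obtain ⟨z, hz, w, hw, hzw⟩ := hφnc
  exact hzw (by rw [hφ z hz, hφ w hw, hb, zero_mul, zero_mul])

variable {a b : ℂ} (hψ : ∀ z ∈ unitDisk, ψ z = a * z ^ n) (hφ : ∀ z ∈ unitDisk, φ z = b * z)
include hψ hφ

lemma apply_monomialBasis_of_symbols (hα : -1 < α) (j : ℕ) :
    T (M.monomialBasis hα j) =
      (a * j.descFactorial n * b ^ (j - n)) • M.monomialBasis hα j := by
  rw [M.apply_monomialBasis_eq_smul_iff, hT.apply_monomial_eq_smul_iff hφm]
  intro z hz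
  rcases lt_or_ge j n with hj | hj
  · simp [Nat.descFactorial_of_lt hj]
  · obtain ⟨k, rfl⟩ := Nat.exists_eq_add_of_le hj
    rw [hψ z hz, hφ z hz, Nat.add_sub_cancel_left]
    ring

lemma mem_unitDisk_of_symbols (hα : -1 < α) (hn : n ≠ 0) (ha : a ≠ 0) : b ∈ unitDisk := by
  by_contra hb
  have hb1 : 1 ≤ ‖b‖ := by simpa [unitDisk] using hb
  have hbound (k : ℕ) : ‖a‖ * (k + 1 : ℕ) ≤ ‖T‖ :=
    calc ‖a‖ * (k + 1 : ℕ)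
        ≤ ‖a‖ * (n + k).descFactorial n := by gcongr; exact succ_le_add_descFactorial hn k
      _ ≤ ‖a‖ * (n + k).descFactorial n * ‖b‖ ^ k :=
        le_mul_of_one_le_right (by positivity) (one_le_pow₀ hb1)
      _ = ‖a * (n + k).descFactorial n * b ^ (n + k - n)‖ := by
        rw [norm_mul, norm_mul, norm_pow, Complex.norm_natCast, Nat.add_sub_cancel_left]
      _ ≤ ‖T‖ := norm_le_opNorm_of_apply_eq_smul ((M.monomialBasis hα).orthonormal.ne_zero _)
        (hT.apply_monomialBasis_of_symbols hφm hψ hφ hα _)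
  obtain ⟨k, hk⟩ := exists_nat_gt (‖T‖ / ‖a‖)
  rw [div_lt_iff₀' (norm_pos_iff.mpr ha)] at hk
  have hsucc : ‖a‖ * k ≤ ‖a‖ * (k + 1 : ℕ) := by gcongr; exact k.le_succ
  exact (hk.trans_le (hsucc.trans (hbound k))).false

end IsWeightedCompDiff

/-- If `φ(0) = 0` and `D_{ψ,φ,n}` is bounded on `A_α²`, then `D_{ψ,φ,n}` is
normal iff `ψ(z) = a z^n` and `φ(z) = bz` with `a ∈ ℂ \ {0}` and `b ∈ 𝔻 \ {0}`; moreover,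
in that case `D_{ψ,φ,n}` is `J`-symmetric. -/
theorem stmt_14 (α : ℝ) (hα : -1 < α) (n : ℕ) (hn : 1 ≤ n)
    (H : Type) [NormedAddCommGroup H] [InnerProductSpace ℂ H] [CompleteSpace H]
    (M : BergmanModel α H)
    (ψ : ℂ → ℂ) (hψa : AnalyticOnNhd ℂ ψ unitDisk)
    (hψ0 : ∃ z ∈ unitDisk, ψ z ≠ 0)
    (φ : ℂ → ℂ) (hφa : AnalyticOnNhd ℂ φ unitDisk)
    (hφm : ∀ z ∈ unitDisk, φ z ∈ unitDisk)
    (hφnc : ∃ z ∈ unitDisk, ∃ w ∈ unitDisk, φ z ≠ φ w)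
    (hφ0 : φ 0 = 0)
    (T : H →L[ℂ] H)
    (hT : ∀ f : H, ∀ z ∈ unitDisk,
      M.emb (T f) z = ψ z * iteratedDeriv n (M.emb f) (φ z))
    (Jm : H → H)
    (hJm : ∀ f : H, ∀ z ∈ unitDisk,
      M.emb (Jm f) z = (starRingEnd ℂ) (M.emb f ((starRingEnd ℂ) z))) :
    (T.comp (ContinuousLinearMap.adjoint T) = (ContinuousLinearMap.adjoint T).comp T ↔
      ∃ a b : ℂ, a ≠ 0 ∧ b ∈ unitDisk ∧ b ≠ 0 ∧
        (∀ z ∈ unitDisk, ψ z = a * z ^ n) ∧ (∀ z ∈ unitDisk, φ z = b * z)) ∧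
    (T.comp (ContinuousLinearMap.adjoint T) = (ContinuousLinearMap.adjoint T).comp T →
      ∀ f : H, Jm (ContinuousLinearMap.adjoint T (Jm f)) = T f) := by
  have hD : IsWeightedCompDiff M ψ φ n T := hT
  have hψ := hψa 0 zero_mem_unitDisk
  have hφ := hφa 0 zero_mem_unitDisk
  rw [comp_adjoint_eq_adjoint_comp_iff_isStarNormal]
  refine ⟨⟨fun hN => ?_, ?_⟩, fun hN => ?_⟩
  · obtain ⟨l, hl⟩ := hD.exists_diagonal_of_isStarNormal hφm hα hN hψ hφ hφ0
    obtain ⟨a, b, ha, hb, hψz, hφz⟩ := hD.exists_symbols_of_diagonal hφm hα hl hφ0 hψ0 hφnc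
    have hb_mem := hD.mem_unitDisk_of_symbols hφm hψz hφz hα (Nat.one_le_iff_ne_zero.mp hn) ha
    exact ⟨a, b, ha, hb_mem, hb, hψz, hφz⟩
  · rintro ⟨a, b, -, -, -, hψz, hφz⟩
    exact isStarNormal_of_diagonal (M.monomialBasis hα)
      (hD.apply_monomialBasis_of_symbols hφm hψz hφz hα)
  · obtain ⟨l, hl⟩ := hD.exists_diagonal_of_isStarNormal hφm hα hN hψ hφ hφ0
    exact conj_adjoint_conj_apply_of_diagonal (M.monomialBasis hα) hl
      (M.inner_monomialBasis_conj hα hJm)
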